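/- Let 𝒯 be a well-founded tree, c an injective function from finite sequences of naturals to ℕ, and φ₀ the unique function on 𝒯 with φ₀(x⃗) = 2·c(x⃗)+1 on leaves and φ₀(x⃗) = 2·φ₀(x⃗·0) on internal nodes. Let d ∈ ℕ and x₀,…,x_d ∈ ℕ be such that for every w ≤ d+1 the sequence x^w := (x₀,…,x_{w−1}) is an internal node of 𝒯. Put y_w = φ₀(x^w·0) for w ≤ d+1, and assume the odd parts θ(y₀),…,θ(y_{d+1}) are pairwise distinct. Let K ∈ ℕ and define G₁ : (ℕ → ℕ) → ℕ by: G₁(g) = K if g(0) = y_{d+1}; otherwise, if g(0) = y_w for some w ≤ d (unique, since the y's are pairwise distinct), then G₁(g) = K if g(x_w) = K and G₁(g) = 2·g(0) otherwise; otherwise G₁(g) = 2·g(0). Let φ₁ be the unique function on 𝒯 with φ₁(x⃗) = 2·c(x⃗)+1 on leaves and φ₁(x⃗) = G₁(λz. φ₁(x⃗·z)) on internal nodes. Then φ₁(x^w·0) = y_w for every w ≤ d+1. -/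

import Mathlib

/-- The function `[x⃗ j^ω]` extending a finite sequence by the constant `j`. -/
def extSeq (x : List ℕ) (j : ℕ) : ℕ → ℕ := fun i => x.getD i j

/-- The Spector bar condition: `F([x⃗ 0^ω]) < |x⃗|`. -/
def SpecBar (F : (ℕ → ℕ) → ℕ) (x : List ℕ) : Prop :=
  F (extSeq x 0) < x.length

/-- The Kohlenbach bar condition: `F([x⃗ 0^ω]) = F([x⃗ 1^ω])`. -/
def KohBar (F : (ℕ → ℕ) → ℕ) (x : List ℕ) : Prop :=
  F (extSeq x 0) = F (extSeq x 1)

/-- The Spector tree of `F`: sequences none of whose proper prefixes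
satisfy the Spector bar condition. -/
def SpecTree (F : (ℕ → ℕ) → ℕ) : Set (List ℕ) :=
  {x | ∀ y, y <+: x → y ≠ x → ¬ SpecBar F y}

/-- The Kohlenbach tree of `F`. -/
def KohTree (F : (ℕ → ℕ) → ℕ) : Set (List ℕ) :=
  {x | ∀ y, y <+: x → y ≠ x → ¬ KohBar F y}

/-- `x` is a leaf of `T`. -/
def LeafNode (T : Set (List ℕ)) (x : List ℕ) : Prop :=
  x ∈ T ∧ ∀ y : ℕ, x ++ [y] ∉ T

/-- `x` is an internal node of `T`. -/
def InternalNode (T : Set (List ℕ)) (x : List ℕ) : Prop :=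
  x ∈ T ∧ ∀ y : ℕ, x ++ [y] ∈ T

/-- `T` is a tree: nonempty, prefix-closed, and every node is a leaf or internal. -/
def IsTree (T : Set (List ℕ)) : Prop :=
  T.Nonempty ∧ (∀ x ∈ T, ∀ y, y <+: x → y ∈ T) ∧
    ∀ x ∈ T, LeafNode T x ∨ InternalNode T x

/-- `T` is well-founded: no infinite sequence all of whose initial segments lie in `T`. -/
def WFTree (T : Set (List ℕ)) : Prop :=
  ¬ ∃ x : ℕ → ℕ, ∀ i : ℕ, (List.range i).map x ∈ T

/-- The odd part `θ(n)` of a natural number. -/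
def oddPart (n : ℕ) : ℕ := n / 2 ^ (n.factorization 2)

theorem oddPart_two_pow_mul (k n : ℕ) (hn : 0 < n) : oddPart (2 ^ k * n) = oddPart n := by
  unfold oddPart
  have h : (2 ^ k * n).factorization 2 = k + n.factorization 2 := by
    rw [Nat.factorization_mul (by positivity) (by omega)]
    simp [Nat.Prime.factorization_pow Nat.prime_two]
  rw [h, pow_add, Nat.mul_div_mul_left _ _ (by positivity)]

theorem exists_zeros_notMem (T : Set (List ℕ)) (hT : IsTree T) (hwf : WFTree T) (v : List ℕ) :
    ∃ N, v ++ List.replicate N 0 ∉ T := by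
  by_contra hcon
  push Not at hcon
  apply hwf
  refine ⟨fun i => v.getD i 0, fun i => ?_⟩
  refine hT.2.1 _ (hcon i) _ ?_
  have : (List.range i).map (fun i => v.getD i 0) = (v ++ List.replicate i 0).take i := by
    apply List.ext_getElem
    · simp
    · intro n h1 h2
      simp at h1
      simp [List.getElem_append, List.getD_eq_getElem?_getD]
      split_ifs with h
      · simp [h]
      · simp [List.getElem?_eq_none (not_lt.mp h)]
  rw [this]
  exact List.take_prefix _ _

theorem phi1_y_values (T : Set (List ℕ)) (hT : IsTree T) (hwf : WFTree T)
    (c : List ℕ → ℕ) (hc : Function.Injective c)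
    (φ₀ : List ℕ → ℕ)
    (hleaf0 : ∀ v, LeafNode T v → φ₀ v = 2 * c v + 1)
    (hint0 : ∀ v, InternalNode T v → φ₀ v = 2 * φ₀ (v ++ [0]))
    (d : ℕ) (xs : ℕ → ℕ)
    (hxs : ∀ w ≤ d + 1, InternalNode T ((List.range w).map xs))
    (y : ℕ → ℕ)
    (hy : ∀ w ≤ d + 1, y w = φ₀ ((List.range w).map xs ++ [0]))
    (hdist : ∀ w ≤ d + 1, ∀ w' ≤ d + 1, w ≠ w' → oddPart (y w) ≠ oddPart (y w'))
    (K : ℕ) (G₁ : (ℕ → ℕ) → ℕ)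
    (hG₁ : ∀ g : ℕ → ℕ,
      (g 0 = y (d + 1) → G₁ g = K) ∧
      (∀ w ≤ d, g 0 = y w → g 0 ≠ y (d + 1) →
        G₁ g = if g (xs w) = K then K else 2 * g 0) ∧
      ((∀ w ≤ d + 1, g 0 ≠ y w) → G₁ g = 2 * g 0))
    (φ₁ : List ℕ → ℕ)
    (hleaf1 : ∀ v, LeafNode T v → φ₁ v = 2 * c v + 1)
    (hint1 : ∀ v, InternalNode T v → φ₁ v = G₁ (fun z => φ₁ (v ++ [z]))) :
    ∀ w ≤ d + 1, φ₁ ((List.range w).map xs ++ [0]) = y w := by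
  intro w hw
  have key : ∀ N u k, u ∈ T → u ++ List.replicate N 0 ∉ T → y w = 2 ^ k * φ₀ u →
      φ₁ u = φ₀ u ∧ 0 < φ₀ u := by
    intro N
    induction N with
    | zero => intro u k hu hn; simp at hn; exact absurd hu hn
    | succ N ih =>
      intro u k hu hn hk
      rcases hT.2.2 u hu with hl | hi
      · rw [hleaf1 u hl, hleaf0 u hl]
        exact ⟨rfl, by omega⟩
      · have h0 := hint0 u hi
        have hk' : y w = 2 ^ (k + 1) * φ₀ (u ++ [0]) := by
          rw [hk, h0]; ring
        obtain ⟨h1, h2⟩ := ih (u ++ [0]) (k + 1) (hi.2 0)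
          (by simpa [List.replicate_succ] using hn) hk'
        refine ⟨?_, by omega⟩
        rw [hint1 u hi, (hG₁ _).2.2, h0, h1]
        intro w' hw'
        show φ₁ (u ++ [0]) ≠ y w'
        rw [h1]
        intro he
        by_cases hww : w = w'
        · subst hww
          rw [← he] at hk'
          have : 2 ≤ 2 ^ (k + 1) := by
            rw [pow_succ]; have := Nat.one_le_two_pow (n := k); omega
          nlinarith
        · apply hdist w hw w' hw' hww
          rw [hk', oddPart_two_pow_mul _ _ h2, he]
  obtain ⟨N, hN⟩ := exists_zeros_notMem T hT hwf ((List.range w).map xs ++ [0])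
  rw [(key N _ 0 ((hxs w hw).2 0) hN (by rw [hy w hw]; simp)).1, hy w hw]
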